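/- Let r ≥ 3 and let n ≥ (r-1)(2r+1)/2 be an integer. Then the positive codegree Turán number of T_r satisfies co⁺ex(n, T_r) = ⌊n/r⌋, i.e. the maximum of δ⁺_{r-1}(H) over all n-vertex T_r-free r-graphs H (with at least one edge) equals ⌊n/r⌋. -/

import Mathlib

variable {V : Type*} [Fintype V] [DecidableEq V]

/-- The (r-1)-shadow of an r-graph: all (r-1)-sets contained in some edge. -/
def sshadow (r : ℕ) (H : Finset (Finset V)) : Finset (Finset V) :=
  Finset.univ.filter (fun e => e.card = r - 1 ∧ ∃ E ∈ H, e ⊆ E)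

/-- The codegree neighborhood of a set `e`: vertices `v` with `e ∪ {v} ∈ H`. -/
def nbhd (H : Finset (Finset V)) (e : Finset V) : Finset V :=
  Finset.univ.filter (fun v => insert v e ∈ H)

/-- The neighborhood of a vertex. -/
def vnbhd (H : Finset (Finset V)) (v : V) : Finset V :=
  Finset.univ.filter (fun u => u ≠ v ∧ ∃ E ∈ H, u ∈ E ∧ v ∈ E)

/-- `H` is T_r-free. -/
def IsTrFree (r : ℕ) (H : Finset (Finset V)) : Prop :=
  ¬ ∃ (S W : Finset V) (a b : V),
      S.card = r - 1 ∧ W.card = r - 2 ∧ a ≠ b ∧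
      a ∉ S ∧ b ∉ S ∧ a ∉ W ∧ b ∉ W ∧ Disjoint S W ∧
      insert a S ∈ H ∧ insert b S ∈ H ∧ insert a (insert b W) ∈ H

/-- A set of vertices is independent. -/
def IsIndep (H : Finset (Finset V)) (I : Finset V) : Prop :=
  ∀ E ∈ H, (E ∩ I).card ≤ 1

/-- `H` is r-partite. -/
def IsRPartite (r : ℕ) (H : Finset (Finset V)) : Prop :=
  ∃ P : Fin r → Finset V, (∀ v : V, ∃! i, v ∈ P i) ∧ ∀ i, IsIndep H (P i)

/-- Minimum positive codegree. -/
noncomputable def minPosCodeg (r : ℕ) (H : Finset (Finset V)) : ℕ :=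
  sInf {k | ∃ e ∈ sshadow r H, (nbhd H e).card = k}

theorem aux_shadow {r : ℕ} (hr : 3 ≤ r) {H : Finset (Finset V)}
    (hu : ∀ E ∈ H, E.card = r) {E : Finset V} (hE : E ∈ H) {w : V} (hw : w ∈ E) :
    E.erase w ∈ sshadow r H := by
  simp only [sshadow, Finset.mem_filter, Finset.mem_univ, true_and]
  exact ⟨by rw [Finset.card_erase_of_mem hw, hu E hE], E, hE, Finset.erase_subset _ _⟩

theorem aux_notmem {r : ℕ} (hr : 3 ≤ r) {H : Finset (Finset V)}
    (hu : ∀ E ∈ H, E.card = r) {e : Finset V} (he : e.card = r - 1) {v : V}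
    (hv : v ∈ nbhd H e) : v ∉ e ∧ insert v e ∈ H := by
  simp only [nbhd, Finset.mem_filter, Finset.mem_univ, true_and] at hv
  refine ⟨fun h => ?_, hv⟩
  have := hu _ hv
  rw [Finset.insert_eq_of_mem h] at this
  omega

theorem aux_replace {r : ℕ} (hr : 3 ≤ r) {H : Finset (Finset V)}
    (hu : ∀ E ∈ H, E.card = r) (hd : ∀ e ∈ sshadow r H, r ≤ (nbhd H e).card)
    {S : Finset V} (hS : S.card = r - 1) {a b : V} (hab : a ≠ b) (ha : a ∉ S) (hb : b ∉ S)
    (k : ℕ) : ∀ W : Finset V, W.card = r - 2 → a ∉ W → b ∉ W → (W ∩ S).card = k →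
      insert a (insert b W) ∈ H →
      ∃ W' : Finset V, W'.card = r - 2 ∧ a ∉ W' ∧ b ∉ W' ∧ Disjoint S W' ∧
        insert a (insert b W') ∈ H := by
  induction k with
  | zero =>
    intro W hW haW hbW hk hH
    refine ⟨W, hW, haW, hbW, ?_, hH⟩
    rw [Finset.card_eq_zero] at hk
    exact (Finset.disjoint_iff_inter_eq_empty.2 hk).symm
  | succ k ih =>
    intro W hW haW hbW hk hH
    obtain ⟨w, hw⟩ : (W ∩ S).Nonempty := by
      rw [← Finset.card_pos]; omega
    have hwW := (Finset.mem_inter.1 hw).1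
    have hwS := (Finset.mem_inter.1 hw).2
    have hwE : w ∈ insert a (insert b W) := by simp [hwW]
    have hsh := aux_shadow hr hu hH hwE
    have hcard : ((insert a (insert b W)).erase w).card = r - 1 := by
      rw [Finset.card_erase_of_mem hwE, hu _ hH]
    obtain ⟨v, hv, hvS⟩ : ∃ v ∈ nbhd H ((insert a (insert b W)).erase w), v ∉ S := by
      by_contra! hcon
      have := Finset.card_le_card (show nbhd H ((insert a (insert b W)).erase w) ⊆ S from hcon)
      have := hd _ hsh
      omega
    obtain ⟨hvn, hvH⟩ := aux_notmem hr hu hcard hv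
    have haw : a ≠ w := fun h => haW (h ▸ hwW)
    have hbw : b ≠ w := fun h => hbW (h ▸ hwW)
    have hvw : v ≠ w := fun h => hvS (h ▸ hwS)
    have hva : v ≠ a := by rintro rfl; exact hvn (by simp [haw])
    have hvb : v ≠ b := by rintro rfl; exact hvn (by simp [hbw])
    have hvW : v ∉ W := fun h => hvn (by simp [h, hvw])
    refine ih (insert v (W.erase w)) ?_ ?_ ?_ ?_ ?_
    · rw [Finset.card_insert_of_notMem (by simp [hvW]), Finset.card_erase_of_mem hwW]
      omega
    · simp [hva.symm, haW]
    · simp [hvb.symm, hbW]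
    · have : insert v (W.erase w) ∩ S = (W ∩ S).erase w := by
        ext x
        simp only [Finset.mem_inter, Finset.mem_insert, Finset.mem_erase]
        constructor
        · rintro ⟨rfl | h, h2⟩
          · exact absurd h2 hvS
          · tauto
        · tauto
      rw [this, Finset.card_erase_of_mem hw]
      omega
    · convert hvH using 1
      ext x
      simp only [Finset.mem_insert, Finset.mem_erase]
      constructor
      · rintro (rfl | rfl | rfl | h) <;> tauto
      · tauto

theorem aux_upper {r : ℕ} (hr : 3 ≤ r) {H : Finset (Finset V)}
    (hu : ∀ E ∈ H, E.card = r) (hf : IsTrFree r H) (hne : H.Nonempty) (d : ℕ) (hrd : r ≤ d)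
    (hd : ∀ e ∈ sshadow r H, d ≤ (nbhd H e).card) : r * d ≤ Fintype.card V := by
  by_contra! hlt
  obtain ⟨E, hE⟩ := hne
  have key : ∃ i ∈ E, ∃ j ∈ E, i ≠ j ∧
      ¬ Disjoint (nbhd H (E.erase i)) (nbhd H (E.erase j)) := by
    by_contra! hcon
    have h1 : (E.biUnion fun i => nbhd H (E.erase i)).card
        = ∑ i ∈ E, (nbhd H (E.erase i)).card :=
      Finset.card_biUnion (fun i hi j hj hij => hcon i hi j hj hij)
    have h2 : ∑ i ∈ E, d ≤ ∑ i ∈ E, (nbhd H (E.erase i)).card :=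
      Finset.sum_le_sum (fun i hi => hd _ (aux_shadow hr hu hE hi))
    have h3 := Finset.card_le_univ (E.biUnion fun i => nbhd H (E.erase i))
    rw [Finset.sum_const, hu E hE, smul_eq_mul] at h2
    omega
  obtain ⟨i, hi, j, hj, hij, hnd⟩ := key
  obtain ⟨x, hxi, hxj⟩ := Finset.not_disjoint_iff.1 hnd
  have ci : (E.erase i).card = r - 1 := by rw [Finset.card_erase_of_mem hi, hu E hE]
  have cj : (E.erase j).card = r - 1 := by rw [Finset.card_erase_of_mem hj, hu E hE]
  obtain ⟨hxi', hHi⟩ := aux_notmem hr hu ci hxi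
  obtain ⟨hxj', hHj⟩ := aux_notmem hr hu cj hxj
  have hxE : x ∉ E := by
    intro h
    have h1 : x = i := by by_contra h1; exact hxi' (by simp [h, h1])
    have h2 : x = j := by by_contra h1; exact hxj' (by simp [h, h1])
    exact hij (h1.symm.trans h2)
  have hix : i ≠ x := fun h => hxE (h ▸ hi)
  have hij' : i ∈ E.erase j := by simp [hi, hij]
  obtain ⟨W', hW1, hW2, hW3, hW4, hW5⟩ := aux_replace hr hu (fun e he => hrd.trans (hd e he))
    ci hix (by simp) hxi' _ ((E.erase j).erase i)
    (by rw [Finset.card_erase_of_mem hij', cj]; omega) (by simp) (by simp [hxE]) rfl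
    (by rw [Finset.insert_comm, Finset.insert_erase hij']; exact hHj)
  exact hf ⟨E.erase i, W', i, x, ci, hW1, hix, by simp, hxi', hW2, hW3, hW4,
    by rw [Finset.insert_erase hi]; exact hE, hHi, hW5⟩

theorem aux_count (n r c : ℕ) (hr : 0 < r) :
    (Finset.univ.filter (fun v : Fin n => v.val % r = c % r)).card
      = n / r + if c % r < n % r then 1 else 0 := by
  rw [← Nat.count_modEq_card n hr c, Nat.count_eq_card_filter_range]
  rw [← Finset.card_map Fin.valEmbedding]
  apply congrArg Finset.card
  ext x
  rw [Finset.mem_filter, Finset.mem_range]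
  simp only [Finset.mem_map, Finset.mem_filter, Finset.mem_univ, true_and,
    Fin.valEmbedding_apply, Nat.ModEq]
  constructor
  · rintro ⟨a, h, rfl⟩; exact ⟨a.2, h⟩
  · rintro ⟨h1, h2⟩; exact ⟨⟨x, h1⟩, h2, rfl⟩

/-- complete balanced r-partite -/
def auxH (n r : ℕ) : Finset (Finset (Fin n)) :=
  Finset.univ.filter (fun E => E.card = r ∧ E.image (fun v => v.val % r) = Finset.range r)

theorem aux_inj {n r : ℕ} {E : Finset (Fin n)} (hE : E ∈ auxH n r) {a b : Fin n}
    (ha : a ∈ E) (hb : b ∈ E) (h : a.val % r = b.val % r) : a = b := by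
  simp only [auxH, Finset.mem_filter, Finset.mem_univ, true_and] at hE
  have : Set.InjOn (fun v : Fin n => v.val % r) E := by
    rw [← Finset.card_image_iff, hE.2, hE.1, Finset.card_range]
  exact this ha hb h

theorem aux_nbhd {n r : ℕ} (hr : 3 ≤ r) {E : Finset (Fin n)} (hE : E ∈ auxH n r) {w : Fin n}
    (hw : w ∈ E) : nbhd (auxH n r) (E.erase w)
      = Finset.univ.filter (fun v : Fin n => v.val % r = w.val % r) := by
  have hE' := hE
  simp only [auxH, Finset.mem_filter, Finset.mem_univ, true_and] at hE'
  have hu : ∀ E ∈ auxH n r, E.card = r := by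
    intro E hE
    simp only [auxH, Finset.mem_filter, Finset.mem_univ, true_and] at hE
    exact hE.1
  have hc : (E.erase w).card = r - 1 := by rw [Finset.card_erase_of_mem hw, hE'.1]
  ext v
  simp only [Finset.mem_filter, Finset.mem_univ, true_and]
  constructor
  · intro hv
    obtain ⟨hvn, hvH⟩ := aux_notmem hr hu hc hv
    have hvr : v.val % r ∈ E.image (fun v => v.val % r) := by
      rw [hE'.2, Finset.mem_range]; exact Nat.mod_lt _ (by omega)
    obtain ⟨u, huE, huv⟩ := Finset.mem_image.1 hvr
    by_cases huw : u = w
    · rw [← huw]; exact huv.symm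
    · exfalso
      have hu1 : u ∈ E.erase w := by simp [huw, huE]
      have := aux_inj hvH (Finset.mem_insert_of_mem hu1) (Finset.mem_insert_self _ _) huv
      exact hvn (this ▸ hu1)
  · intro hv
    have hvn : v ∉ E.erase w := by
      intro h
      have := aux_inj hE (Finset.mem_of_mem_erase h) hw hv
      exact (Finset.ne_of_mem_erase h) this
    simp only [nbhd, auxH, Finset.mem_filter, Finset.mem_univ, true_and]
    refine ⟨?_, ?_⟩
    · rw [Finset.card_insert_of_notMem hvn, hc]; omega
    · rw [Finset.image_insert, hv, ← Finset.image_insert (f := fun v : Fin n => v.val % r),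
        Finset.insert_erase hw, hE'.2]

theorem stmt1 {r n : ℕ} (hr : 3 ≤ r) (hn : ((r : ℝ) - 1) * (2 * r + 1) / 2 ≤ n) :
    IsGreatest {k : ℕ | ∃ H : Finset (Finset (Fin n)),
      (∀ E ∈ H, E.card = r) ∧ IsTrFree r H ∧ H.Nonempty ∧ minPosCodeg r H = k}
      (n / r) := by
  have hn' : r * (r - 1) ≤ n := by
    have h3 : (3 : ℝ) ≤ r := by exact_mod_cast hr
    have : ((r * (r - 1) : ℕ) : ℝ) ≤ n := by
      rw [Nat.cast_mul, Nat.cast_sub (by omega)]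
      push_cast
      nlinarith
    exact_mod_cast this
  have hdiv : r - 1 ≤ n / r := by
    rw [Nat.le_div_iff_mul_le (by omega), mul_comm]; exact hn'
  have hrn : r ≤ n := by nlinarith [show 1 ≤ r - 1 by omega]
  constructor
  · have hu : ∀ E ∈ auxH n r, E.card = r := by
      intro E hE
      simp only [auxH, Finset.mem_filter, Finset.mem_univ, true_and] at hE
      exact hE.1
    have hE0 : Finset.univ.map (Fin.castLEEmb hrn) ∈ auxH n r := by
      simp only [auxH, Finset.mem_filter, Finset.mem_univ, true_and]
      refine ⟨by simp, ?_⟩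
      ext x
      simp only [Finset.mem_image, Finset.mem_map, Finset.mem_univ, true_and, Finset.mem_range]
      constructor
      · rintro ⟨a, -, rfl⟩; exact Nat.mod_lt _ (by omega)
      · intro hx
        exact ⟨Fin.castLE hrn ⟨x, hx⟩, ⟨⟨x, hx⟩, rfl⟩, by simpa using Nat.mod_eq_of_lt hx⟩
    refine ⟨auxH n r, hu, ?_, ⟨_, hE0⟩, ?_⟩
    · rintro ⟨S, W, a, b, hS, hW, hab, haS, hbS, haW, hbW, hSW, h1, h2, h3⟩
      have hb' : b ∈ nbhd (auxH n r) ((insert a S).erase a) := by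
        rw [Finset.erase_insert haS]; simpa [nbhd] using h2
      rw [aux_nbhd hr h1 (Finset.mem_insert_self _ _)] at hb'
      simp only [Finset.mem_filter, Finset.mem_univ, true_and] at hb'
      exact hab (aux_inj h3 (by simp) (by simp) hb'.symm)
    · refine IsLeast.csInf_eq ⟨?_, ?_⟩
      · have hw : (⟨r - 1, by omega⟩ : Fin n) ∈ Finset.univ.map (Fin.castLEEmb hrn) := by
          simp only [Finset.mem_map, Finset.mem_univ, true_and]
          exact ⟨⟨r - 1, by omega⟩, rfl⟩
        refine ⟨_, aux_shadow hr hu hE0 hw, ?_⟩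
        rw [aux_nbhd hr hE0 hw, aux_count n r (r - 1) (by omega), if_neg, add_zero]
        rw [Nat.mod_eq_of_lt (by omega : r - 1 < r)]
        have := Nat.mod_lt n (by omega : r > 0)
        omega
      · rintro k ⟨e, he, rfl⟩
        simp only [sshadow, Finset.mem_filter, Finset.mem_univ, true_and] at he
        obtain ⟨hec, E, hE, heE⟩ := he
        obtain ⟨w, hw⟩ : (E \ e).Nonempty := by
          rw [← Finset.card_pos, Finset.card_sdiff_of_subset heE, hu E hE]; omega
        rw [Finset.mem_sdiff] at hw
        have : e = E.erase w := by
          apply Finset.eq_of_subset_of_card_le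
          · intro x hx
            exact Finset.mem_erase.2 ⟨fun h => hw.2 (h ▸ hx), heE hx⟩
          · rw [Finset.card_erase_of_mem hw.1, hu E hE, hec]
        rw [this, aux_nbhd hr hE hw.1, aux_count n r w.val (by omega)]
        omega
  · rintro k ⟨H, hu, hf, hne, rfl⟩
    by_contra! hlt
    have := aux_upper hr hu hf hne (n / r + 1) (by omega) (by
      intro e he
      have : minPosCodeg r H ≤ (nbhd H e).card := Nat.sInf_le ⟨e, he, rfl⟩
      omega)
    rw [Fintype.card_fin] at this
    have h2 := Nat.lt_mul_div_succ n (show 0 < r by omega)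
    omega
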